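/- arXiv:2410.13759 — 5 statements merged into one kernel-verified Lean document; each statement's English description precedes it below -/
import Mathlib

section
/- Let N and M be positive integers with M ≤ N, and let θ = arcsin(√(M/N)) ∈ (0, π/2]. If m = ⌊π/(4θ)⌋, then sin²((2m+1)θ) ≥ 1 − M/N. -/
/-! The number `2 * ⌊π / (4 * θ)⌋₊ + 1` is chosen so that its product with `θ` is the odd multiple
of `θ` nearest to `π / 2`, hence at distance at most `θ ≤ π / 2` from it. Since
`sin x = cos (x - π / 2)` and cosine is even and decreasing on `[0, π]`, the sine of that multiple
is at least `cos θ ≥ 0`, and `cos θ ^ 2 = 1 - sin θ ^ 2` is the failure probability of a random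
guess. -/

theorem abs_two_mul_floor_add_one_mul_sub_le {K : Type*} [Field K] [LinearOrder K]
    [IsStrictOrderedRing K] [FloorSemiring K] {a d : K} (ha : 0 ≤ a) (hd : 0 < d) :
    |(2 * (⌊a / (2 * d)⌋₊ : K) + 1) * d - a| ≤ d := by
  have h2d : 0 < 2 * d := by positivity
  have floor_mul_le : (⌊a / (2 * d)⌋₊ : K) * (2 * d) ≤ a :=
    (le_div_iff₀ h2d).1 (Nat.floor_le (by positivity))
  have lt_floor_add_one_mul : a < ((⌊a / (2 * d)⌋₊ : K) + 1) * (2 * d) :=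
    (div_lt_iff₀ h2d).1 (Nat.lt_floor_add_one _)
  rw [abs_le]
  constructor <;> linarith

section

open Real

theorem cos_le_sin_of_abs_sub_pi_div_two_le {x θ : ℝ} (hx : |x - π / 2| ≤ θ) (hθ : θ ≤ π) :
    cos θ ≤ sin x := by
  rw [← cos_sub_pi_div_two, ← cos_abs (x - π / 2)]
  exact cos_le_cos_of_nonneg_of_le_pi (abs_nonneg _) hθ hx

theorem cos_sq_le_sin_sq_two_mul_floor_add_one_mul {θ : ℝ} (hθ₀ : 0 < θ) (hθ : θ ≤ π / 2) :
    cos θ ^ 2 ≤ sin ((2 * (⌊π / (4 * θ)⌋₊ : ℝ) + 1) * θ) ^ 2 := by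
  have nearest : |(2 * (⌊π / (4 * θ)⌋₊ : ℝ) + 1) * θ - π / 2| ≤ θ := by
    have h := abs_two_mul_floor_add_one_mul_sub_le pi_div_two_pos.le hθ₀
    rwa [div_div, ← mul_assoc, show (2 : ℝ) * 2 = 4 by norm_num] at h
  have cos_nonneg : 0 ≤ cos θ := cos_nonneg_of_mem_Icc ⟨by linarith, hθ⟩
  have cos_le_sin := cos_le_sin_of_abs_sub_pi_div_two_le nearest (by linarith)
  exact pow_le_pow_left₀ cos_nonneg cos_le_sin 2

theorem cos_arcsin_sqrt {p : ℝ} (hp : 0 ≤ p) : cos (arcsin √p) = √(1 - p) := by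
  rw [cos_arcsin, sq_sqrt hp]

theorem stmt0_general (p : ℝ) (hp₀ : 0 < p) (hp₁ : p ≤ 1) (θ : ℝ) (hθ : θ = arcsin √p)
    (m : ℕ) (hm : m = ⌊π / (4 * θ)⌋₊) :
    1 - p ≤ sin ((2 * (m : ℝ) + 1) * θ) ^ 2 := by
  subst hm hθ
  calc 1 - p = cos (arcsin √p) ^ 2 := by rw [cos_arcsin_sqrt hp₀.le, sq_sqrt (sub_nonneg.2 hp₁)]
    _ ≤ _ := cos_sq_le_sin_sq_two_mul_floor_add_one_mul (arcsin_pos.2 (sqrt_pos.2 hp₀))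
      (arcsin_le_pi_div_two _)

end

/-- **Grover's algorithm iteration count** (Fact 5.1). Let `N` and `M` be positive integers
with `M ≤ N`, and let `θ = arcsin (√(M/N))`. If `m = ⌊π/(4θ)⌋`, then after `m` Grover
iterations the success probability satisfies `sin²((2m+1)θ) ≥ 1 − M/N`. -/
theorem stmt0 (N M : ℕ) (hM : 0 < M) (hMN : M ≤ N)
    (θ : ℝ) (hθ : θ = Real.arcsin (Real.sqrt ((M : ℝ) / (N : ℝ))))
    (m : ℕ) (hm : m = ⌊Real.pi / (4 * θ)⌋₊) :
    1 - (M : ℝ) / (N : ℝ) ≤ Real.sin ((2 * (m : ℝ) + 1) * θ) ^ 2 := by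
  have hN : (0 : ℝ) < N := Nat.cast_pos.2 (hM.trans_le hMN)
  exact stmt0_general _ (div_pos (Nat.cast_pos.2 hM) hN) ((div_le_one hN).2 (Nat.cast_le.2 hMN))
    θ hθ m hm
end

section
/- Define, for α ∈ (0, √3/2), f₁(α) = 4(1−α²)/(3−4α²) and g(α) = 16(1−α²)²/(3(3−4α²)). Then max(f₁(α), g(α)) ≥ 3/2 for every α ∈ (0, √3/2), with equality exactly at α = 1/2 (where f₁(1/2) = g(1/2) = 3/2). -/
/-!
Both costs depend on `α` only through `x = α²`, and with the common denominator `3 - 4x > 0`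
their excess over `3/2` factors with a common root at `x = 1/4`:
`f₁ - 3/2 = (4x - 1) / (2(3 - 4x))` and `g - 3/2 = (4x - 1)(8x - 5) / (6(3 - 4x))`.
To the right of `1/4` the first excess is positive. To the left of `1/4` the second one is,
because its other root `5/8` lies on the far side.
-/

theorem sq_eq_one_fourth_iff {K : Type*} [Field K] [LinearOrder K] [IsStrictOrderedRing K] {x : K}
    (hx : 0 ≤ x) : x ^ 2 = 1 / 4 ↔ x = 1 / 2 := by
  rw [← sq_eq_sq₀ hx one_half_pos.le]
  norm_num

theorem sq_lt_div_four_of_lt_sqrt_div_two {a b : ℝ} (ha : 0 ≤ a) (hab : a < √b / 2) :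
    a ^ 2 < b / 4 := by
  have hsq : (2 * a) ^ 2 < b := (Real.lt_sqrt (by positivity)).1 (by linarith)
  linarith

section Costs

variable {K : Type*} [Field K]

/-- The base `f₁` of the total filtering cost `f₁ ^ (D/2 + o(D))` of NVSieve in dimension `D` with
spherical filters of parameter `α`, as a function of `x = α²`. -/
def filteringBase (x : K) : K :=
  4 * (1 - x) / (3 - 4 * x)

/-- The base `g` of the total searching cost `g ^ (D/2 + o(D))` of NVSieve in dimension `D` with
spherical filters of parameter `α`, as a function of `x = α²`. -/
def searchingBase (x : K) : K :=
  16 * (1 - x) ^ 2 / (3 * (3 - 4 * x))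

theorem filteringBase_sub_three_halves [CharZero K] {x : K} (hden : 3 - 4 * x ≠ 0) :
    filteringBase x - 3 / 2 = (4 * x - 1) / (2 * (3 - 4 * x)) := by
  unfold filteringBase
  field_simp
  ring

theorem searchingBase_sub_three_halves [CharZero K] {x : K} (hden : 3 - 4 * x ≠ 0) :
    searchingBase x - 3 / 2 = (4 * x - 1) * (8 * x - 5) / (6 * (3 - 4 * x)) := by
  unfold searchingBase
  rw [div_sub_div _ _ (by simpa using hden) two_ne_zero,
    div_eq_div_iff (by simpa using hden) (by simpa using hden)]
  ring

variable [LinearOrder K] [IsStrictOrderedRing K] {x : K}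

theorem three_halves_lt_filteringBase (hx : 1 / 4 < x) (hx' : x < 3 / 4) :
    3 / 2 < filteringBase x := by
  have hden : 0 < 3 - 4 * x := by linarith
  rw [← sub_pos, filteringBase_sub_three_halves hden.ne']
  exact div_pos (by linarith) (by positivity)

theorem three_halves_lt_searchingBase (hx : x < 1 / 4) : 3 / 2 < searchingBase x := by
  have hden : 0 < 3 - 4 * x := by linarith
  have hnum : 0 < (4 * x - 1) * (8 * x - 5) :=
    mul_pos_of_neg_of_neg (by linarith) (by linarith)
  rw [← sub_pos, searchingBase_sub_three_halves hden.ne']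
  exact div_pos hnum (by positivity)

theorem three_halves_lt_max_filteringBase_searchingBase (hx : x < 3 / 4) (hne : x ≠ 1 / 4) :
    3 / 2 < max (filteringBase x) (searchingBase x) := by
  rcases hne.lt_or_gt with hlt | hgt
  · exact lt_max_of_lt_right (three_halves_lt_searchingBase hlt)
  · exact lt_max_of_lt_left (three_halves_lt_filteringBase hgt hx)

theorem max_filteringBase_searchingBase_one_fourth :
    max (filteringBase (1 / 4 : K)) (searchingBase (1 / 4)) = 3 / 2 := by
  norm_num [filteringBase, searchingBase]

theorem stmt12_general (hx : x < 3 / 4) :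
    3 / 2 ≤ max (filteringBase x) (searchingBase x) ∧
      (max (filteringBase x) (searchingBase x) = 3 / 2 ↔ x = 1 / 4) := by
  rcases eq_or_ne x (1 / 4) with rfl | hne
  · simp only [max_filteringBase_searchingBase_one_fourth, le_refl, and_self]
  · have hlt := three_halves_lt_max_filteringBase_searchingBase hx hne
    exact ⟨hlt.le, iff_of_false hlt.ne' hne⟩

end Costs

/-- **Optimal filter parameter of classical NVSieve with spherical LSF**. For
`α ∈ (0, √3/2)` define `f₁(α) = 4(1−α²)/(3−4α²)` and `g(α) = 16(1−α²)²/(3(3−4α²))`.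
Then `max(f₁(α), g(α)) ≥ 3/2`, with equality exactly at `α = 1/2`. -/
theorem stmt12 (α : ℝ) (hα : α ∈ Set.Ioo (0:ℝ) (Real.sqrt 3 / 2)) :
    3 / 2 ≤ max (4 * (1 - α ^ 2) / (3 - 4 * α ^ 2))
        (16 * (1 - α ^ 2) ^ 2 / (3 * (3 - 4 * α ^ 2))) ∧
      (max (4 * (1 - α ^ 2) / (3 - 4 * α ^ 2))
          (16 * (1 - α ^ 2) ^ 2 / (3 * (3 - 4 * α ^ 2))) = 3 / 2 ↔ α = 1 / 2) := by
  simpa only [filteringBase, searchingBase, sq_eq_one_fourth_iff hα.1.le] using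
    stmt12_general (sq_lt_div_four_of_lt_sqrt_div_two hα.1.le hα.2)
end

section
/- Define, for α ∈ (0, √3/2), f₁(α) = 4(1−α²)/(3−4α²) and f₂(α) = 8(1−α²)/(3√(3−4α²)). Then max(f₁(α), f₂(α)) ≥ 13/9 for every α ∈ (0, √3/2), with equality exactly at α = √3/4 (where f₁(√3/4) = f₂(√3/4) = 13/9). -/
/-!
Put `s = √(3 - 4α²) > 0`, so that `1 - α² = (1 + s²) / 4`. The filtering term becomes
`1 + 1 / s²`, which decreases in `s`, and the searching term becomes `(2 / 3) (s + 1 / s)`, which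
increases for `s ≥ 1`. Both equal `13 / 9` at `s = 3 / 2`, so their maximum is smallest there and
only there; finally `s = 3 / 2` means `α² = 3 / 16`.
-/

open Set

section Crossing

variable {β γ : Type*} [LinearOrder β] [LinearOrder γ] {f g : β → γ} {t : Set β} {c x : β} {m : γ}

lemma lt_max_of_strictAntiOn_of_strictMonoOn (hf : StrictAntiOn f (t ∩ Iic c))
    (hg : StrictMonoOn g (t ∩ Ici c)) (hfc : f c = m) (hgc : g c = m) (hc : c ∈ t) (hx : x ∈ t)
    (hne : x ≠ c) : m < max (f x) (g x) := by
  rcases hne.lt_or_gt with hlt | hgt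
  · exact lt_max_of_lt_left (hfc ▸ hf ⟨hx, hlt.le⟩ ⟨hc, le_rfl⟩ hlt)
  · exact lt_max_of_lt_right (hgc ▸ hg ⟨hc, le_rfl⟩ ⟨hx, hgt.le⟩ hgt)

lemma max_eq_iff_of_strictAntiOn_of_strictMonoOn (hf : StrictAntiOn f (t ∩ Iic c))
    (hg : StrictMonoOn g (t ∩ Ici c)) (hfc : f c = m) (hgc : g c = m) (hc : c ∈ t) (hx : x ∈ t) :
    max (f x) (g x) = m ↔ x = c := by
  refine ⟨fun h => ?_, fun h => by rw [h, hfc, hgc, max_self]⟩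
  by_contra hne
  exact (lt_max_of_strictAntiOn_of_strictMonoOn hf hg hfc hgc hc hx hne).ne' h

lemma le_max_of_strictAntiOn_of_strictMonoOn (hf : StrictAntiOn f (t ∩ Iic c))
    (hg : StrictMonoOn g (t ∩ Ici c)) (hfc : f c = m) (hgc : g c = m) (hc : c ∈ t) (hx : x ∈ t) :
    m ≤ max (f x) (g x) := by
  rcases eq_or_ne x c with rfl | hne
  · exact hfc ▸ le_max_left _ _
  · exact (lt_max_of_strictAntiOn_of_strictMonoOn hf hg hfc hgc hc hx hne).le

end Crossing

section Monotonicity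

variable {K : Type*} [Field K] [LinearOrder K] [IsStrictOrderedRing K]

lemma strictAntiOn_one_add_inv_sq : StrictAntiOn (fun s : K => 1 + (s ^ 2)⁻¹) (Ioi 0) := by
  intro s (hs : 0 < s) t _ hst
  dsimp only
  gcongr

lemma strictMonoOn_add_inv : StrictMonoOn (fun s : K => s + s⁻¹) (Ici 1) := by
  intro s (hs : 1 ≤ s) t (ht : 1 ≤ t) hst
  have hs0 : 0 < s := one_pos.trans_le hs
  have ht0 : 0 < t := one_pos.trans_le ht
  have hst1 : 1 < s * t := one_lt_mul_of_le_of_lt hs (hs.trans_lt hst)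
  have hdiff : t + t⁻¹ - (s + s⁻¹) = (t - s) * (s * t - 1) / (s * t) := by
    field_simp
    ring
  refine sub_pos.mp (hdiff ▸ ?_)
  exact div_pos (mul_pos (sub_pos.mpr hst) (sub_pos.mpr hst1)) (mul_pos hs0 ht0)

end Monotonicity

section Substitution

variable {α : ℝ}

lemma three_sub_four_mul_sq_pos (hα : |α| < √3 / 2) : 0 < 3 - 4 * α ^ 2 := by
  have hsq : |α| ^ 2 < (√3 / 2) ^ 2 := by gcongr
  rw [sq_abs, div_pow, Real.sq_sqrt (by norm_num)] at hsq
  linarith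

lemma filtering_term_eq_one_add_inv_sq (h : 0 < 3 - 4 * α ^ 2) :
    4 * (1 - α ^ 2) / (3 - 4 * α ^ 2) = 1 + (√(3 - 4 * α ^ 2) ^ 2)⁻¹ := by
  rw [Real.sq_sqrt h.le]
  field_simp
  ring

lemma searching_term_eq_add_inv (h : 0 < 3 - 4 * α ^ 2) :
    8 * (1 - α ^ 2) / (3 * √(3 - 4 * α ^ 2)) =
      2 / 3 * (√(3 - 4 * α ^ 2) + (√(3 - 4 * α ^ 2))⁻¹) := by
  have hnum : 8 * (1 - α ^ 2) = 2 * (√(3 - 4 * α ^ 2) ^ 2 + 1) := by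
    rw [Real.sq_sqrt h.le]
    ring
  rw [hnum]
  field_simp

lemma sqrt_three_sub_four_mul_sq_eq_iff (hα : 0 ≤ α) :
    √(3 - 4 * α ^ 2) = 3 / 2 ↔ α = √3 / 4 := by
  rw [Real.sqrt_eq_iff_mul_self_eq_of_pos (by norm_num), ← sq_eq_sq₀ hα (by positivity), div_pow √3,
    Real.sq_sqrt (by norm_num)]
  constructor <;> intro h <;> linarith

end Substitution

/-- **Optimal filter parameter of quantum NVSieve with spherical LSF**. For
`α ∈ (0, √3/2)` define `f₁(α) = 4(1−α²)/(3−4α²)` and `f₂(α) = 8(1−α²)/(3√(3−4α²))`.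
Then `max(f₁(α), f₂(α)) ≥ 13/9`, with equality exactly at `α = √3/4`. -/
theorem stmt13 (α : ℝ) (hα : α ∈ Set.Ioo (0:ℝ) (Real.sqrt 3 / 2)) :
    13 / 9 ≤ max (4 * (1 - α ^ 2) / (3 - 4 * α ^ 2))
        (8 * (1 - α ^ 2) / (3 * Real.sqrt (3 - 4 * α ^ 2))) ∧
      (max (4 * (1 - α ^ 2) / (3 - 4 * α ^ 2))
          (8 * (1 - α ^ 2) / (3 * Real.sqrt (3 - 4 * α ^ 2))) = 13 / 9 ↔
        α = Real.sqrt 3 / 4) := by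
  have hpos : 0 < 3 - 4 * α ^ 2 := three_sub_four_mul_sq_pos (by rw [abs_of_pos hα.1]; exact hα.2)
  have hs : √(3 - 4 * α ^ 2) ∈ Ioi 0 := Real.sqrt_pos.mpr hpos
  have hf : StrictAntiOn (fun s : ℝ => 1 + (s ^ 2)⁻¹) (Ioi 0 ∩ Iic (3 / 2)) :=
    strictAntiOn_one_add_inv_sq.mono inter_subset_left
  have hg : StrictMonoOn (fun s : ℝ => 2 / 3 * (s + s⁻¹)) (Ioi 0 ∩ Ici (3 / 2)) :=
    (strictMono_mul_left_of_pos (by norm_num)).comp_strictMonoOn <|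
      strictMonoOn_add_inv.mono (inter_subset_right.trans (Ici_subset_Ici.mpr (by norm_num)))
  have hfc : 1 + ((3 / 2 : ℝ) ^ 2)⁻¹ = 13 / 9 := by norm_num
  have hgc : 2 / 3 * (3 / 2 + (3 / 2 : ℝ)⁻¹) = 13 / 9 := by norm_num
  have hc : (3 / 2 : ℝ) ∈ Ioi 0 := by norm_num
  rw [filtering_term_eq_one_add_inv_sq hpos, searching_term_eq_add_inv hpos,
    ← sqrt_three_sub_four_mul_sq_eq_iff hα.1.le]
  exact ⟨le_max_of_strictAntiOn_of_strictMonoOn hf hg hfc hgc hc hs,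
    max_eq_iff_of_strictAntiOn_of_strictMonoOn hf hg hfc hgc hc hs⟩
end

section
/- Let D ≥ 2 be an integer, let v, w ∈ S^{D−1} be unit vectors, and let θ = arccos⟨v,w⟩. Then σ({a ∈ S^{D−1} : (⟨a,v⟩ ≥ 0) ↔ (⟨a,w⟩ ≥ 0)}) = 1 − θ/π. -/
open scoped RealInnerProductSpace

/-!
Write `S v w` for the set of `a` at which `⟪a, v⟫` and `⟪a, w⟫` have the same sign. A product of two
reflections carries any pair of unit vectors to any other pair at the same angle, so for a
rotation-invariant measure `μ` the value `μ (S v w)` depends only on the angle `θ` of `v` and `w`.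
It may therefore be averaged over the pairs `(e s, e (s + θ))`, where `e` runs through a great
circle. By Tonelli this is the integral over `a` of the length of the set of `s ∈ (0, 2π]` with
`a ∈ S (e s) (e (s + θ))`. As a function of `s`, the inner product `⟪a, e s⟫` is a multiple of
`cos (s - α)`, positive unless `a` is orthogonal to the circle, and the length is then `2π - 2θ`.

That the exceptional `a` form a null set is Tonelli again: for fixed `a ≠ 0`, Lebesgue-almost no `x`
is orthogonal to `a`, so some hyperplane `xᗮ` is `μ`-null, and by invariance all of them are.
-/

open MeasureTheory Module Set Submodule
open InnerProductGeometry (angle)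
open Real (cos sin pi_pos)
open scoped Real

section Isometry

variable {E : Type*} [NormedAddCommGroup E] [InnerProductSpace ℝ E] {v w v' w' : E}

lemma exists_linearIsometryEquiv_map_pair (hv : ‖v‖ = ‖v'‖) (hw : ‖w‖ = ‖w'‖)
    (h : ⟪v, w⟫ = ⟪v', w'⟫) : ∃ O : E ≃ₗᵢ[ℝ] E, O v = v' ∧ O w = w' := by
  set R := (ℝ ∙ (v - v'))ᗮ.reflection
  have hRv : R v = v' := reflection_sub hv
  set S := (ℝ ∙ (R w - w'))ᗮ.reflection
  have hSw : S (R w) = w' := reflection_sub (by rw [R.norm_map, hw])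
  have hSv : S v' = v' := by
    apply reflection_mem_subspace_eq_self
    rw [mem_orthogonal_singleton_iff_inner_left, inner_sub_right, ← h, ← hRv, R.inner_map_map,
      sub_self]
  exact ⟨R.trans S, by simp [hRv, hSv], by simp [hSw]⟩

lemma exists_linearIsometryEquiv_map_pair_of_angle_eq (hv : v ≠ 0) (hw : w ≠ 0) (hv' : v' ≠ 0)
    (hw' : w' ≠ 0) (h : angle v w = angle v' w') :
    ∃ (O : E ≃ₗᵢ[ℝ] E) (c d : ℝ), 0 < c ∧ 0 < d ∧ O v = c • v' ∧ O w = d • w' := by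
  have hnv' : 0 < ‖v'‖ := norm_pos_iff.mpr hv'
  have hnw' : 0 < ‖w'‖ := norm_pos_iff.mpr hw'
  have hc : 0 < ‖v‖ / ‖v'‖ := div_pos (norm_pos_iff.mpr hv) hnv'
  have hd : 0 < ‖w‖ / ‖w'‖ := div_pos (norm_pos_iff.mpr hw) hnw'
  obtain ⟨O, hOv, hOw⟩ := exists_linearIsometryEquiv_map_pair (v := v) (w := w)
    (v' := (‖v‖ / ‖v'‖) • v') (w' := (‖w‖ / ‖w'‖) • w')
    (by rw [norm_smul_of_nonneg hc.le, div_mul_cancel₀ _ hnv'.ne'])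
    (by rw [norm_smul_of_nonneg hd.le, div_mul_cancel₀ _ hnw'.ne'])
    (by
      rw [real_inner_smul_left, real_inner_smul_right,
        ← InnerProductGeometry.cos_angle_mul_norm_mul_norm v w,
        ← InnerProductGeometry.cos_angle_mul_norm_mul_norm v' w', h]
      field_simp)
  exact ⟨O, _, _, hc, hd, hOv, hOw⟩

end Isometry

section SignAgreement

variable {E : Type*} [NormedAddCommGroup E] [InnerProductSpace ℝ E]

/-- The set of `a` for which `v` and `w` receive the same hash `1[⟪a, ·⟫ ≥ 0]`. -/
def signAgreement (v w : E) : Set E :=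
  {a | 0 ≤ ⟪a, v⟫ ↔ 0 ≤ ⟪a, w⟫}

lemma signAgreement_smul_smul {c d : ℝ} (hc : 0 < c) (hd : 0 < d) (v w : E) :
    signAgreement (c • v) (d • w) = signAgreement v w := by
  simp only [signAgreement, real_inner_smul_right, mul_nonneg_iff_of_pos_left hc,
    mul_nonneg_iff_of_pos_left hd]

lemma preimage_signAgreement_map (O : E ≃ₗᵢ[ℝ] E) (v w : E) :
    O ⁻¹' signAgreement (O v) (O w) = signAgreement v w := by
  simp only [signAgreement, preimage_ofPred_eq, O.inner_map_map]

lemma measurableSet_setOf_nonneg_iff_nonneg {X : Type*} [MeasurableSpace X] {f g : X → ℝ}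
    (hf : Measurable f) (hg : Measurable g) : MeasurableSet {x | 0 ≤ f x ↔ 0 ≤ g x} :=
  (measurableSet_le measurable_const hf).iff (measurableSet_le measurable_const hg)

lemma measurableSet_signAgreement [MeasurableSpace E] [BorelSpace E] (v w : E) :
    MeasurableSet (signAgreement v w) :=
  measurableSet_setOf_nonneg_iff_nonneg (by fun_prop) (by fun_prop)

end SignAgreement

section Invariance

variable {E : Type*} [NormedAddCommGroup E] [InnerProductSpace ℝ E] [MeasurableSpace E]

/-- A measure on a Euclidean space which is invariant under the whole orthogonal group. The uniform
measure on a sphere centred at the origin is of this kind when regarded as a measure on the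
ambient space. -/
def IsOrthogonallyInvariant (μ : Measure E) : Prop :=
  ∀ O : E ≃ₗᵢ[ℝ] E, MeasurePreserving O μ μ

lemma isOrthogonallyInvariant_map_coe_sphere [BorelSpace E] {r : ℝ}
    {σ : Measure (Metric.sphere (0 : E) r)}
    (hσ : ∀ O : E ≃ₗᵢ[ℝ] E,
      σ.map (fun x => ⟨O x, by rw [mem_sphere_zero_iff_norm, O.norm_map, norm_eq_of_mem_sphere]⟩) =
        σ) :
    IsOrthogonallyInvariant (σ.map (↑) : Measure E) := by
  refine fun O => ⟨O.continuous.measurable, ?_⟩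
  conv_rhs => rw [← hσ O]
  have hO : Measurable fun x : Metric.sphere (0 : E) r => O x :=
    O.continuous.measurable.comp measurable_subtype_coe
  rw [Measure.map_map O.continuous.measurable measurable_subtype_coe,
    Measure.map_map measurable_subtype_coe (hO.subtype_mk)]
  rfl

namespace IsOrthogonallyInvariant

variable {μ : Measure E}

lemma ae_inner_ne_zero_congr (hμ : IsOrthogonallyInvariant μ) {x u : E} (hx : x ≠ 0)
    (hu : u ≠ 0) (h : ∀ᵐ a ∂μ, ⟪a, x⟫ ≠ 0) : ∀ᵐ a ∂μ, ⟪a, u⟫ ≠ 0 := by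
  obtain ⟨O, c, -, hc, -, hO, -⟩ := exists_linearIsometryEquiv_map_pair_of_angle_eq hu hu hx hx
    (by rw [InnerProductGeometry.angle_self hu, InnerProductGeometry.angle_self hx])
  filter_upwards [(hμ O).quasiMeasurePreserving.ae h] with a ha
  rw [← O.inner_map_map, hO, real_inner_smul_right]
  exact mul_ne_zero hc.ne' ha

variable [BorelSpace E]

lemma measure_signAgreement_eq_of_angle_eq (hμ : IsOrthogonallyInvariant μ) {v w v' w' : E}
    (hv : v ≠ 0) (hw : w ≠ 0) (hv' : v' ≠ 0) (hw' : w' ≠ 0) (h : angle v w = angle v' w') :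
    μ (signAgreement v w) = μ (signAgreement v' w') := by
  obtain ⟨O, c, d, hc, hd, hOv, hOw⟩ :=
    exists_linearIsometryEquiv_map_pair_of_angle_eq hv hw hv' hw' h
  rw [← preimage_signAgreement_map O,
    (hμ O).measure_preimage (measurableSet_signAgreement _ _).nullMeasurableSet, hOv, hOw,
    signAgreement_smul_smul hc hd]

lemma ae_inner_ne_zero [FiniteDimensional ℝ E] [SFinite μ] (hμ : IsOrthogonallyInvariant μ)
    (hμ0 : μ {0} = 0) {u : E} (hu : u ≠ 0) : ∀ᵐ a ∂μ, ⟪a, u⟫ ≠ 0 := by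
  have : Nontrivial E := ⟨u, 0, hu⟩
  have hvolume : ∀ᵐ a ∂μ, ∀ᵐ x : E, ⟪a, x⟫ ≠ 0 := by
    filter_upwards [show ∀ᵐ a ∂μ, a ≠ 0 by simpa [ae_iff] using hμ0] with a ha
    have : (ℝ ∙ a)ᗮ ≠ ⊤ := by simpa [orthogonal_eq_top_iff] using ha
    simpa [ae_iff, ← mem_orthogonal_singleton_iff_inner_right] using
      Measure.addHaar_submodule volume _ this
  have hmeasure : ∀ᵐ x : E, ∀ᵐ a ∂μ, ⟪a, x⟫ ≠ 0 := by
    rwa [← Measure.ae_ae_comm]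
    exact (measurableSet_eq_fun (by fun_prop) measurable_const).compl
  obtain ⟨x, hx, hx0⟩ := (hmeasure.and (Measure.ae_ne volume 0)).exists
  exact hμ.ae_inner_ne_zero_congr hx0 hu hx

end IsOrthogonallyInvariant

end Invariance

section Cosine

lemma volume_inter_Ioc_eq_of_periodic {T : ℝ} (hT : 0 < T) {A : Set ℝ} (hA : MeasurableSet A)
    (hper : Function.Periodic (· ∈ A) T) (a b : ℝ) :
    volume (A ∩ Ioc a (a + T)) = volume (A ∩ Ioc b (b + T)) := by
  refine (isAddFundamentalDomain_Ioc hT a).measure_set_eq (isAddFundamentalDomain_Ioc hT b) hA ?_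
  rintro ⟨g, hg⟩
  obtain ⟨n, rfl⟩ := AddSubgroup.mem_zmultiples_iff.mp hg
  ext x
  simpa [AddSubgroup.mk_vadd, add_comm] using iff_of_eq (hper.zsmul n x)

lemma cos_nonneg_iff_abs_le {x : ℝ} (hx : |x| < 3 * π / 2) : 0 ≤ cos x ↔ |x| ≤ π / 2 := by
  rw [← Real.cos_abs]
  refine ⟨fun h => ?_, fun h => Real.cos_nonneg_of_neg_pi_div_two_le_of_le
    (by linarith [abs_nonneg x, pi_pos]) h⟩
  by_contra! hlt
  exact h.not_gt (Real.cos_neg_of_pi_div_two_lt_of_lt hlt (by linarith))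

lemma cos_nonneg_iff_cos_add_nonneg {s θ : ℝ} (hθ0 : 0 ≤ θ) (hθπ : θ ≤ π)
    (hl : -(3 * π / 2) < s) (hr : s < π / 2) :
    (0 ≤ cos s ↔ 0 ≤ cos (s + θ)) ↔ s + θ < -(π / 2) ∨ (-(π / 2) ≤ s ∧ s + θ ≤ π / 2) := by
  have hπ := pi_pos
  rw [cos_nonneg_iff_abs_le (abs_lt.mpr ⟨by linarith, by linarith⟩),
    cos_nonneg_iff_abs_le (abs_lt.mpr ⟨by linarith, by linarith⟩), abs_le, abs_le]
  grind

lemma volume_cos_nonneg_iff_cos_add_nonneg_inter_Ioc {θ : ℝ} (hθ0 : 0 ≤ θ) (hθπ : θ ≤ π) (t : ℝ) :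
    volume ({s | 0 ≤ cos s ↔ 0 ≤ cos (s + θ)} ∩ Ioc t (t + 2 * π)) =
      ENNReal.ofReal (2 * π - 2 * θ) := by
  have hπ := pi_pos
  rw [volume_inter_Ioc_eq_of_periodic Real.two_pi_pos
    (measurableSet_setOf_nonneg_iff_nonneg (by fun_prop) (by fun_prop))
    (fun s => by simp [add_right_comm s]) t (-(3 * π / 2))]
  -- The window `(-3π/2, π/2]` keeps `s` and `s + θ` within `(-3π/2, 3π/2)`, except at `s = π/2`.
  have hae : ({s | 0 ≤ cos s ↔ 0 ≤ cos (s + θ)} ∩ Ioc (-(3 * π / 2)) (-(3 * π / 2) + 2 * π) : Set ℝ)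
      =ᵐ[volume] (Ioo (-(3 * π / 2)) (-(π / 2) - θ) ∪ Icc (-(π / 2)) (π / 2 - θ) : Set ℝ) := by
    rw [Filter.eventuallyEq_set]
    filter_upwards [Measure.ae_ne volume (π / 2)] with s hs
    have hagree := cos_nonneg_iff_cos_add_nonneg (s := s) hθ0 hθπ
    simp only [mem_inter_iff, mem_union, mem_ofPred_eq, mem_Ioc, mem_Ioo, mem_Icc]
    grind
  have hdisj : Disjoint (Ioo (-(3 * π / 2)) (-(π / 2) - θ)) (Icc (-(π / 2)) (π / 2 - θ)) :=
    Set.disjoint_left.mpr fun s hs hs' => by linarith [hs.2, hs'.1]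
  rw [measure_congr hae, measure_union hdisj measurableSet_Icc, Real.volume_Ioo, Real.volume_Icc,
    ← ENNReal.ofReal_add (by linarith) (by linarith)]
  ring_nf

lemma volume_cos_sub_nonneg_iff_inter_Ioc {θ : ℝ} (hθ0 : 0 ≤ θ) (hθπ : θ ≤ π) (α t : ℝ) :
    volume ({s | 0 ≤ cos (s - α) ↔ 0 ≤ cos (s + θ - α)} ∩ Ioc t (t + 2 * π)) =
      ENNReal.ofReal (2 * π - 2 * θ) := by
  rw [← volume_cos_nonneg_iff_cos_add_nonneg_inter_Ioc hθ0 hθπ (t - α),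
    ← measure_preimage_add_right volume (-α)
      ({s | 0 ≤ cos s ↔ 0 ≤ cos (s + θ)} ∩ Ioc (t - α) (t - α + 2 * π))]
  congr 1
  ext s
  simp only [mem_inter_iff, mem_preimage, mem_ofPred_eq, mem_Ioc, ← sub_eq_add_neg,
    sub_add_eq_add_sub, sub_lt_sub_iff_right, sub_le_sub_iff_right]

end Cosine

section GreatCircle

variable {E : Type*} [NormedAddCommGroup E] [InnerProductSpace ℝ E]

/-- The parametrised circle spanned by the pair `e`: for orthonormal `e` a great circle of the unit
sphere, run through at unit speed. -/
noncomputable def greatCircle (e : Fin 2 → E) (s : ℝ) : E :=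
  cos s • e 0 + sin s • e 1

lemma continuous_greatCircle (e : Fin 2 → E) : Continuous (greatCircle e) := by
  unfold greatCircle
  fun_prop

lemma exists_inner_greatCircle_eq_mul_cos {a : E} {e : Fin 2 → E} (h : ⟪a, e 0⟫ ≠ 0) :
    ∃ r > 0, ∃ α, ∀ s, ⟪a, greatCircle e s⟫ = r * cos (s - α) := by
  set z : ℂ := ⟨⟪a, e 0⟫, ⟪a, e 1⟫⟩ with hz
  refine ⟨‖z‖, norm_pos_iff.mpr fun h0 => h (congrArg Complex.re h0), z.arg, fun s => ?_⟩
  calc ⟪a, greatCircle e s⟫ = cos s * z.re + sin s * z.im := by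
        simp only [greatCircle, inner_add_right, real_inner_smul_right, hz]
    _ = cos s * (‖z‖ * cos z.arg) + sin s * (‖z‖ * sin z.arg) := by
        rw [Complex.norm_mul_cos_arg, Complex.norm_mul_sin_arg]
    _ = ‖z‖ * cos (s - z.arg) := by
        rw [Real.cos_sub]
        ring

lemma volume_mem_signAgreement_greatCircle {a : E} {e : Fin 2 → E} (h : ⟪a, e 0⟫ ≠ 0) {θ : ℝ}
    (hθ0 : 0 ≤ θ) (hθπ : θ ≤ π) (t : ℝ) :
    volume ({s | a ∈ signAgreement (greatCircle e s) (greatCircle e (s + θ))} ∩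
      Ioc t (t + 2 * π)) = ENNReal.ofReal (2 * π - 2 * θ) := by
  obtain ⟨r, hr, α, hcos⟩ := exists_inner_greatCircle_eq_mul_cos h
  simp only [signAgreement, mem_ofPred_eq, hcos, mul_nonneg_iff_of_pos_left hr]
  exact volume_cos_sub_nonneg_iff_inter_Ioc hθ0 hθπ α t

variable {e : Fin 2 → E} (he : Orthonormal ℝ e)
include he

lemma inner_greatCircle_greatCircle (s t : ℝ) :
    ⟪greatCircle e s, greatCircle e t⟫ = cos (t - s) := by
  have h00 : ⟪e 0, e 0⟫ = 1 := by simp [he.1]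
  have h11 : ⟪e 1, e 1⟫ = 1 := by simp [he.1]
  simp only [greatCircle, inner_add_left, inner_add_right, real_inner_smul_left,
    real_inner_smul_right, h00, h11, he.2 zero_ne_one, he.2 one_ne_zero, Real.cos_sub]
  ring

lemma norm_greatCircle (s : ℝ) : ‖greatCircle e s‖ = 1 := by
  rw [norm_eq_sqrt_real_inner, inner_greatCircle_greatCircle he, sub_self, Real.cos_zero,
    Real.sqrt_one]

lemma greatCircle_ne_zero (s : ℝ) : greatCircle e s ≠ 0 :=
  norm_ne_zero_iff.mp (by simp [norm_greatCircle he])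

lemma angle_greatCircle_greatCircle_add (s : ℝ) {θ : ℝ} (hθ0 : 0 ≤ θ) (hθπ : θ ≤ π) :
    angle (greatCircle e s) (greatCircle e (s + θ)) = θ := by
  simp [angle, norm_greatCircle he, inner_greatCircle_greatCircle he, Real.arccos_cos hθ0 hθπ]

end GreatCircle

section Collision

variable {E : Type*} [NormedAddCommGroup E] [InnerProductSpace ℝ E] [FiniteDimensional ℝ E]
  [MeasurableSpace E] [BorelSpace E] {μ : Measure E} [SFinite μ]

lemma IsOrthogonallyInvariant.lintegral_measure_signAgreement_greatCircle
    (hμ : IsOrthogonallyInvariant μ) (hμ0 : μ {0} = 0) {e : Fin 2 → E} (he : e 0 ≠ 0) {θ : ℝ}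
    (hθ0 : 0 ≤ θ) (hθπ : θ ≤ π) :
    ∫⁻ s in Ioc 0 (0 + 2 * π), μ (signAgreement (greatCircle e s) (greatCircle e (s + θ))) =
      ENNReal.ofReal (2 * π - 2 * θ) * μ univ := by
  have hcont := continuous_greatCircle e
  have hT : MeasurableSet
      {p : ℝ × E | p.2 ∈ signAgreement (greatCircle e p.1) (greatCircle e (p.1 + θ))} :=
    measurableSet_setOf_nonneg_iff_nonneg (by fun_prop) (by fun_prop)
  calc ∫⁻ s in Ioc 0 (0 + 2 * π), μ (signAgreement (greatCircle e s) (greatCircle e (s + θ)))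
      = ∫⁻ a, volume.restrict (Ioc 0 (0 + 2 * π))
          {s | a ∈ signAgreement (greatCircle e s) (greatCircle e (s + θ))} ∂μ :=
        (Measure.prod_apply hT).symm.trans (Measure.prod_apply_symm hT)
    _ = ∫⁻ _, ENNReal.ofReal (2 * π - 2 * θ) ∂μ := by
        refine lintegral_congr_ae ?_
        filter_upwards [hμ.ae_inner_ne_zero hμ0 he] with a ha
        rw [Measure.restrict_apply' measurableSet_Ioc,
          volume_mem_signAgreement_greatCircle ha hθ0 hθπ]
    _ = ENNReal.ofReal (2 * π - 2 * θ) * μ univ := lintegral_const _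

theorem IsOrthogonallyInvariant.measure_signAgreement (hμ : IsOrthogonallyInvariant μ)
    (hμ0 : μ {0} = 0) (hE : 2 ≤ finrank ℝ E) {v w : E} (hv : v ≠ 0) (hw : w ≠ 0) :
    μ (signAgreement v w) = ENNReal.ofReal (1 - angle v w / π) * μ univ := by
  set θ := angle v w
  have hθ0 : 0 ≤ θ := InnerProductGeometry.angle_nonneg v w
  have hθπ : θ ≤ π := InnerProductGeometry.angle_le_pi v w
  set e : Fin 2 → E := stdOrthonormalBasis ℝ E ∘ Fin.castLE hE
  have he : Orthonormal ℝ e :=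
    (stdOrthonormalBasis ℝ E).orthonormal.comp _ (Fin.castLE_injective hE)
  have hconst (s : ℝ) :
      μ (signAgreement (greatCircle e s) (greatCircle e (s + θ))) = μ (signAgreement v w) :=
    hμ.measure_signAgreement_eq_of_angle_eq (greatCircle_ne_zero he _) (greatCircle_ne_zero he _)
      hv hw (angle_greatCircle_greatCircle_add he s hθ0 hθπ)
  have haverage : μ (signAgreement v w) * ENNReal.ofReal (2 * π) =
      ENNReal.ofReal (2 * π - 2 * θ) * μ univ := by
    simpa [hconst] using
      hμ.lintegral_measure_signAgreement_greatCircle hμ0 (he.ne_zero 0) hθ0 hθπ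
  have h2π : ENNReal.ofReal (2 * π) ≠ 0 := by simp [pi_pos]
  rw [← ENNReal.mul_left_inj h2π ENNReal.ofReal_ne_top, haverage, mul_right_comm,
    ← ENNReal.ofReal_mul (by rw [sub_nonneg, div_le_one pi_pos]; exact hθπ)]
  congr 2
  field_simp

theorem stmt18_general (hE : 2 ≤ finrank ℝ E) {v w : E} (hv : v ≠ 0) (hw : w ≠ 0) {r : ℝ}
    (hr : r ≠ 0) (σ : Measure (Metric.sphere (0 : E) r)) [SFinite σ]
    (hσ : ∀ O : E ≃ₗᵢ[ℝ] E,
      σ.map (fun x => ⟨O x, by rw [mem_sphere_zero_iff_norm, O.norm_map, norm_eq_of_mem_sphere]⟩) =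
        σ) :
    σ {a | 0 ≤ ⟪(a : E), v⟫ ↔ 0 ≤ ⟪(a : E), w⟫} =
      ENNReal.ofReal (1 - angle v w / π) * σ univ := by
  have hcoe : Measurable ((↑) : Metric.sphere (0 : E) r → E) := measurable_subtype_coe
  have hσ0 : σ.map (↑) {(0 : E)} = 0 := by
    rw [Measure.map_apply hcoe (measurableSet_singleton 0), preimage_singleton_eq_empty.mpr,
      measure_empty]
    simpa using hr.symm
  have hcollision :=
    (isOrthogonallyInvariant_map_coe_sphere hσ).measure_signAgreement hσ0 hE hv hw
  rwa [Measure.map_apply hcoe (measurableSet_signAgreement v w), Measure.map_apply hcoe .univ]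
    at hcollision

end Collision

/-- **Charikar's collision probability for angular LSH**. Let `D ≥ 2`, let `v, w` be unit
vectors in `ℝ^D` at angle `θ = arccos ⟨v,w⟩`, and let `σ` be the uniform
(rotation-invariant) Borel probability measure on the unit sphere. Then
`σ({a : (⟨a,v⟩ ≥ 0) ↔ (⟨a,w⟩ ≥ 0)}) = 1 − θ/π`. -/
theorem stmt18 (D : ℕ) (hD : 2 ≤ D)
    (v w : EuclideanSpace ℝ (Fin D)) (hv : ‖v‖ = 1) (hw : ‖w‖ = 1)
    (σ : MeasureTheory.Measure (Metric.sphere (0 : EuclideanSpace ℝ (Fin D)) 1))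
    [MeasureTheory.IsProbabilityMeasure σ]
    (hσinv : ∀ O : EuclideanSpace ℝ (Fin D) ≃ₗᵢ[ℝ] EuclideanSpace ℝ (Fin D),
      MeasureTheory.Measure.map
        (fun x : Metric.sphere (0 : EuclideanSpace ℝ (Fin D)) 1 =>
          (⟨O x.1, by
            have h : ‖(x : EuclideanSpace ℝ (Fin D))‖ = 1 := mem_sphere_zero_iff_norm.mp x.2
            exact mem_sphere_zero_iff_norm.mpr (by rw [O.norm_map]; exact h)⟩ :
            Metric.sphere (0 : EuclideanSpace ℝ (Fin D)) 1)) σ = σ)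
    (θ : ℝ) (hθ : θ = Real.arccos ⟪v, w⟫) :
    σ {a : (Metric.sphere (0 : EuclideanSpace ℝ (Fin D)) 1) |
        (0 ≤ ⟪(a : EuclideanSpace ℝ (Fin D)), v⟫ ↔ 0 ≤ ⟪(a : EuclideanSpace ℝ (Fin D)), w⟫)} =
      ENNReal.ofReal (1 - θ / Real.pi) := by
  have := stmt18_general (by simpa using hD) (v := v) (w := w) (norm_ne_zero_iff.mp (by simp [hv]))
    (norm_ne_zero_iff.mp (by simp [hw])) one_ne_zero σ hσinv
  simpa [hθ, angle, hv, hw] using this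
end

section
/- Let ε ∈ (0,1) and let t be a real number with t ≥ ln(1/ε), and set k = (ln t − ln ln(1/ε)) / ln(3/2), so that k ≥ 0 and (2/3)^k = ln(1/ε)/t. Then for every θ ∈ [0, π/3], (1 − (1 − θ/π)^k)^t ≤ ε; equivalently, the collision probability 1 − (1 − (1 − θ/π)^k)^t of two vectors at angle θ ≤ π/3 in at least one of t hash tables, each built from a k-fold AND-composition of angular hash functions with single-function collision probability 1 − θ/π, is at least 1 − ε. -/
/-!
If a single hash collides with probability `p ≥ p₀`, then an AND-composition of `k ≥ 0` of them
collides with probability `p ^ k ≥ p₀ ^ k`, so by `1 - x ≤ exp (-x)` all `t` tables fail with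
probability at most `exp (-(p₀ ^ k * t))`. The exponent `k` is the solution of
`p₀ ^ k = log (1 / ε) / t`, for which this bound is exactly `ε`. For angular hashes and angles up
to `π / 3` one has `p₀ = 2 / 3`.
-/

open Real Set

theorem one_sub_rpow_le_exp_neg_mul {x t : ℝ} (hx : x ≤ 1) (ht : 0 ≤ t) :
    (1 - x) ^ t ≤ exp (-(x * t)) :=
  calc
    (1 - x) ^ t ≤ exp (-x) ^ t := rpow_le_rpow (sub_nonneg.2 hx) (one_sub_le_exp_neg x) ht
    _ = exp (-(x * t)) := by rw [← exp_mul, neg_mul]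

theorem one_sub_rpow_rpow_le_exp_neg_mul {p₀ p k t : ℝ} (hp₀ : 0 ≤ p₀) (hp : p ∈ Icc p₀ 1)
    (hk : 0 ≤ k) (ht : 0 ≤ t) :
    (1 - p ^ k) ^ t ≤ exp (-(p₀ ^ k * t)) := by
  have hpk_le_one : p ^ k ≤ 1 := rpow_le_one (hp₀.trans hp.1) hp.2 hk
  have hpk_ge : p₀ ^ k ≤ p ^ k := rpow_le_rpow hp₀ hp.1 hk
  calc
    (1 - p ^ k) ^ t ≤ exp (-(p ^ k * t)) := one_sub_rpow_le_exp_neg_mul hpk_le_one ht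
    _ ≤ exp (-(p₀ ^ k * t)) := by gcongr

theorem rpow_log_sub_log_div_log_inv {b x y : ℝ} (hb : 0 < b) (hb_ne : b ≠ 1) (hx : 0 < x)
    (hy : 0 < y) :
    b ^ ((log y - log x) / log b⁻¹) = x / y := by
  have h_logb : (log y - log x) / log b⁻¹ = logb b (x / y) := by
    rw [logb, log_inv, log_div hx.ne' hy.ne', div_neg, ← neg_div, neg_sub]
  rw [h_logb, rpow_logb hb hb_ne (div_pos hx hy)]

theorem one_sub_div_pi_mem_Icc {θ θ₀ : ℝ} (hθ : θ ∈ Icc 0 θ₀) :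
    1 - θ / π ∈ Icc (1 - θ₀ / π) 1 :=
  ⟨by have := hθ.2; gcongr, sub_le_self 1 (div_nonneg hθ.1 pi_pos.le)⟩

theorem stmt19_general {ε t p₀ p k : ℝ} (hε : ε ∈ Ioo 0 1) (ht : log (1 / ε) ≤ t)
    (hp₀ : p₀ ∈ Ioo 0 1) (hk : k = (log t - log (log (1 / ε))) / log p₀⁻¹)
    (hp : p ∈ Icc p₀ 1) :
    (1 - p ^ k) ^ t ≤ ε ∧ 1 - ε ≤ 1 - (1 - p ^ k) ^ t := by
  have hL : 0 < log (1 / ε) := log_pos (one_lt_one_div hε.1 hε.2)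
  have ht_pos : 0 < t := hL.trans_le ht
  have hk_nonneg : 0 ≤ k := by
    rw [hk]
    exact div_nonneg (sub_nonneg.2 (log_le_log hL ht)) (log_pos (one_lt_inv₀ hp₀.1 |>.2 hp₀.2)).le
  have hp₀_rpow : p₀ ^ k = log (1 / ε) / t := by
    rw [hk, rpow_log_sub_log_div_log_inv hp₀.1 hp₀.2.ne hL ht_pos]
  have h_fail : (1 - p ^ k) ^ t ≤ ε :=
    calc
      (1 - p ^ k) ^ t ≤ exp (-(p₀ ^ k * t)) :=
        one_sub_rpow_rpow_le_exp_neg_mul hp₀.1.le hp hk_nonneg ht_pos.le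
      _ = exp (-log (1 / ε)) := by rw [hp₀_rpow, div_mul_cancel₀ _ ht_pos.ne']
      _ = ε := by rw [one_div, log_inv, neg_neg, exp_log hε.1]
  exact ⟨h_fail, sub_le_sub_left h_fail 1⟩

/-- **Nearby vectors collide in at least one angular-LSH table**. Let `ε ∈ (0,1)` and let
`t ≥ ln(1/ε)` be real, and set `k = (ln t − ln ln(1/ε)) / ln(3/2)` (so that `k ≥ 0` and
`(2/3)^k = ln(1/ε)/t`). Then for every `θ ∈ [0, π/3]`, `(1 − (1 − θ/π)^k)^t ≤ ε`;
equivalently, the collision probability `1 − (1 − (1 − θ/π)^k)^t` in at least one of `t`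
hash tables, each a `k`-fold AND-composition of angular hashes, is at least `1 − ε`. -/
theorem stmt19 (ε : ℝ) (hε : ε ∈ Set.Ioo (0:ℝ) 1) (t : ℝ) (ht : Real.log (1 / ε) ≤ t)
    (k : ℝ) (hk : k = (Real.log t - Real.log (Real.log (1 / ε))) / Real.log (3 / 2)) :
    ∀ θ ∈ Set.Icc (0:ℝ) (Real.pi / 3),
      (1 - (1 - θ / Real.pi) ^ k) ^ t ≤ ε ∧
        1 - ε ≤ 1 - (1 - (1 - θ / Real.pi) ^ k) ^ t := by
  have hp₀ : 1 - π / 3 / π = 2 / 3 := by field_simp; norm_num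
  exact fun θ hθ ↦ stmt19_general hε ht (p₀ := 2 / 3) (by norm_num) (by rwa [inv_div])
    (hp₀ ▸ one_sub_div_pi_mem_Icc hθ)
end
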